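/- Let t > 0, m ≥ 2, and let f : ℝⁿ → S^{m−1} be a Borel measurable encoder with p_data a Borel probability measure on ℝⁿ. Define L_unif(f;t) = log E_{x,y iid ∼ p_data}[e^{−t‖f(x)−f(y)‖₂²}]. Then −2t + log ₀F₁(;m/2; t²) ≤ L_unif(f;t) ≤ 0; the lower bound is achieved if and only if f is perfectly uniform (the pushforward of p_data under f equals σ_{m−1}), and the upper bound 0 is achieved if and only if f is degenerate, i.e., f(x) equals a fixed vector for p_data-almost every x. -/

import Mathlib

open MeasureTheory Real Filter Metric
open scoped RealInnerProductSpace ENNReal Topology BigOperators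

noncomputable section

/-- `ℝ^n` as a Euclidean space. -/
abbrev Euc (n : ℕ) : Type := EuclideanSpace ℝ (Fin n)

/-- The unit sphere in `ℝ^m`; the sphere `S^d` of the informal statement is `Sph (d+1)`. -/
abbrev Sph (m : ℕ) := Metric.sphere (0 : Euc m) 1

/-- The uniform (normalized surface-area) probability measure on the unit sphere of `ℝ^m`. -/
noncomputable def unifSphere (m : ℕ) : Measure (Sph m) :=
  ((volume : Measure (Euc m)).toSphere Set.univ)⁻¹ • (volume : Measure (Euc m)).toSphere

/-- Confluent hypergeometric limit function `₀F₁(; α; z) = Σ_n zⁿ/((α)_n n!)`. -/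
noncomputable def hyp0F1 (α z : ℝ) : ℝ :=
  ∑' k : ℕ, z ^ k / ((ascPochhammer ℝ k).eval α * (Nat.factorial k : ℝ))

/-- The uniformity loss `L_unif(f;t) = log E_{x,y iid ∼ p_data}[exp(−t‖f(x)−f(y)‖²)]`. -/
noncomputable def Lunif {n m : ℕ} (pdata : Measure (Euc n)) (f : Euc n → Sph m) (t : ℝ) : ℝ :=
  Real.log (∫ x, ∫ y, Real.exp (-t * ‖(f x : Euc m) - (f y : Euc m)‖ ^ 2) ∂pdata ∂pdata)

/-! Write `I(μ, ν) = ∫∫ exp (-t ‖u - v‖²) dμ dν`, so that the loss of `f` is `log I(μ, μ)` for `μ`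
the law of `f`. The Gaussian kernel is the Fourier transform of a Gaussian measure of full support,
so `I(μ, μ) - 2 I(μ, ν) + I(ν, ν)` is the squared `L²` distance between the characteristic
functions of `μ` and `ν` with respect to that measure: it is nonnegative and vanishes only for
`μ = ν`. For `ν = σ` uniform on the sphere, the potential `u ↦ ∫ exp (-t ‖u - v‖²) dσ(v)` has a
constant value `c` on the sphere, so the expression reduces to `I(μ, μ) - c`, and `σ` is the
unique minimizer. Since `‖u - v‖² = 2 - 2 ⟪u, v⟫` there, `c` is `exp (-2t)` times the moment
generating function of `⟪u, v⟫` at `2t`; the moments come from evaluating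
`∫ ⟪u, x⟫ʲ exp (-‖x‖²) dx` both in polar and in Cartesian coordinates, and they sum to
`₀F₁(; m/2; t²)`. The upper bound holds because the kernel is at most `1`, with equality only on the
diagonal. -/

section Fourier

open ProbabilityTheory ComplexConjugate

variable {E : Type*} [NormedAddCommGroup E] [InnerProductSpace ℝ E] [MeasurableSpace E]
  [BorelSpace E]

theorem integral_charFun_comm [SecondCountableTopology E] (μ ν : Measure E) [IsFiniteMeasure μ]
    [IsFiniteMeasure ν] : ∫ ξ, charFun μ ξ ∂ν = ∫ ξ, charFun ν ξ ∂μ := by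
  have hint : Integrable (fun p : E × E ↦ Complex.exp (⟪p.2, p.1⟫ * Complex.I)) (ν.prod μ) :=
    .of_bound (C := 1) (by fun_prop) (ae_of_all _ fun p ↦ by simp [Complex.norm_exp])
  simp only [charFun_apply]
  rw [integral_integral_swap hint]
  simp only [real_inner_comm]

theorem charFun_conv_map_neg [SecondCountableTopology E] (μ ν : Measure E) [IsFiniteMeasure μ]
    [IsFiniteMeasure ν] (ξ : E) :
    charFun (μ ∗ ν.map (-·)) ξ = charFun μ ξ * conj (charFun ν ξ) := by
  have hneg : (fun x : E ↦ -x) = ((-1 : ℝ) • ·) := by ext x; simp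
  rw [hneg, charFun_conv, charFun_map_smul, neg_one_smul, charFun_neg]

theorem integrable_inner_charFun [SecondCountableTopology E] (μ ν ρ : Measure E)
    [IsFiniteMeasure μ] [IsFiniteMeasure ν] [IsFiniteMeasure ρ] :
    Integrable (fun ξ ↦ ⟪charFun μ ξ, charFun ν ξ⟫) ρ := by
  refine .of_bound (C := μ.real Set.univ * ν.real Set.univ)
    (Continuous.aestronglyMeasurable (by fun_prop)) (ae_of_all _ fun ξ ↦ ?_)
  exact (norm_inner_le_norm _ _).trans
    (mul_le_mul (norm_charFun_le ξ) (norm_charFun_le ξ) (norm_nonneg _) measureReal_nonneg)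

theorem integrable_norm_charFun_sub_sq [SecondCountableTopology E] (μ ν ρ : Measure E)
    [IsFiniteMeasure μ] [IsFiniteMeasure ν] [IsFiniteMeasure ρ] :
    Integrable (fun ξ ↦ ‖charFun μ ξ - charFun ν ξ‖ ^ 2) ρ := by
  simp_rw [norm_sub_sq_real, ← real_inner_self_eq_norm_sq]
  exact ((integrable_inner_charFun μ μ ρ).sub ((integrable_inner_charFun μ ν ρ).const_mul 2)).add
    (integrable_inner_charFun ν ν ρ)

variable [FiniteDimensional ℝ E] {t : ℝ}

instance isOpenPosMeasure_stdGaussian : (stdGaussian E).IsOpenPosMeasure := by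
  have hreal : (gaussianReal 0 1).IsOpenPosMeasure :=
    (gaussianReal_absolutelyContinuous' 0 one_ne_zero).isOpenPosMeasure
  refine Continuous.isOpenPosMeasure_map (by fun_prop) fun x ↦ ?_
  exact ⟨(stdOrthonormalBasis ℝ E).repr x, (stdOrthonormalBasis ℝ E).sum_repr x⟩

variable (E t) in
/-- The Bochner measure of the Gaussian kernel: the centred Gaussian of covariance `2t`, whose
characteristic function is `w ↦ exp (-t ‖w‖²)`. -/
def gaussianSpectralMeasure : Measure E := (stdGaussian E).map (√(2 * t) • ·)

instance isProbabilityMeasure_gaussianSpectralMeasure :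
    IsProbabilityMeasure (gaussianSpectralMeasure E t) :=
  Measure.isProbabilityMeasure_map (by fun_prop)

theorem isOpenPosMeasure_gaussianSpectralMeasure (ht : 0 < t) :
    (gaussianSpectralMeasure E t).IsOpenPosMeasure :=
  (continuous_const_smul _).isOpenPosMeasure_map
    (MulAction.surjective₀ (Real.sqrt_pos.2 (by positivity)).ne')

theorem charFun_gaussianSpectralMeasure (ht : 0 ≤ t) (w : E) :
    charFun (gaussianSpectralMeasure E t) w = (Real.exp (-t * ‖w‖ ^ 2) : ℝ) := by
  have hexponent : -(√(2 * t) * ‖w‖) ^ 2 / 2 = -t * ‖w‖ ^ 2 := by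
    rw [mul_pow, Real.sq_sqrt (by positivity)]
    ring
  rw [gaussianSpectralMeasure, charFun_map_smul, charFun_stdGaussian, norm_smul,
    Real.norm_of_nonneg (Real.sqrt_nonneg _), ← hexponent]
  push_cast
  rfl

end Fourier

section GaussianEnergy

/-- The mutual energy of two measures for the Gaussian kernel `(u, v) ↦ exp (-t ‖u - v‖²)`. -/
def gaussianEnergy {E : Type*} [NormedAddCommGroup E] [MeasurableSpace E] (t : ℝ)
    (μ ν : Measure E) : ℝ :=
  ∫ u, ∫ v, Real.exp (-t * ‖u - v‖ ^ 2) ∂ν ∂μ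

section NormedGroup

variable {E : Type*} [NormedAddCommGroup E] {t : ℝ}

theorem exp_neg_mul_norm_sq_le_one (ht : 0 ≤ t) (w : E) : Real.exp (-t * ‖w‖ ^ 2) ≤ 1 := by
  rw [Real.exp_le_one_iff, neg_mul]
  exact neg_nonpos.2 (by positivity)

variable [MeasurableSpace E] [BorelSpace E]

theorem integrable_exp_neg_mul_norm_sq (ht : 0 ≤ t) (μ : Measure E) [IsFiniteMeasure μ] :
    Integrable (fun w ↦ Real.exp (-t * ‖w‖ ^ 2)) μ := by
  refine .of_bound (C := 1) (Continuous.aestronglyMeasurable (by fun_prop)) (ae_of_all _ fun w ↦ ?_)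
  rw [Real.norm_of_nonneg (Real.exp_nonneg _)]
  exact exp_neg_mul_norm_sq_le_one ht w

variable [SecondCountableTopology E]

theorem gaussianEnergy_map {Ω Ω' : Type*} [MeasurableSpace Ω] [MeasurableSpace Ω'] {P : Measure Ω}
    {Q : Measure Ω'} [SFinite Q] {g : Ω → E} {h : Ω' → E} (hg : AEMeasurable g P)
    (hh : AEMeasurable h Q) (t : ℝ) :
    gaussianEnergy t (P.map g) (Q.map h) =
      ∫ x, ∫ y, Real.exp (-t * ‖g x - h y‖ ^ 2) ∂Q ∂P := by
  have hpotential : StronglyMeasurable fun u ↦ ∫ v, Real.exp (-t * ‖u - v‖ ^ 2) ∂Q.map h :=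
    StronglyMeasurable.integral_prod_right (f := fun u v : E ↦ Real.exp (-t * ‖u - v‖ ^ 2))
      (Continuous.stronglyMeasurable (by fun_prop))
  rw [gaussianEnergy, integral_map hg hpotential.aestronglyMeasurable]
  congr with x
  exact integral_map hh (Continuous.aestronglyMeasurable (by fun_prop))

theorem integrable_exp_neg_mul_norm_sub_sq (ht : 0 ≤ t) (ρ : Measure (E × E)) [IsFiniteMeasure ρ] :
    Integrable (fun p : E × E ↦ Real.exp (-t * ‖p.1 - p.2‖ ^ 2)) ρ := by
  have hsub : Measurable fun p : E × E ↦ p.1 - p.2 := by fun_prop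
  have h := integrable_exp_neg_mul_norm_sq ht (ρ.map fun p : E × E ↦ p.1 - p.2)
  exact h.comp_measurable hsub

theorem gaussianEnergy_eq_integral_prod (ht : 0 ≤ t) (μ ν : Measure E) [IsFiniteMeasure μ]
    [IsFiniteMeasure ν] :
    gaussianEnergy t μ ν = ∫ p, Real.exp (-t * ‖p.1 - p.2‖ ^ 2) ∂μ.prod ν :=
  (integral_prod _ (integrable_exp_neg_mul_norm_sub_sq ht _)).symm

theorem gaussianEnergy_eq_integral_conv (ht : 0 ≤ t) (μ ν : Measure E) [IsFiniteMeasure μ]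
    [IsFiniteMeasure ν] :
    gaussianEnergy t μ ν = ∫ w, Real.exp (-t * ‖w‖ ^ 2) ∂(μ ∗ ν.map (-·)) := by
  rw [integral_conv (integrable_exp_neg_mul_norm_sq ht _), gaussianEnergy]
  congr with u
  rw [integral_map (by fun_prop) (Continuous.aestronglyMeasurable (by fun_prop))]
  simp only [sub_eq_add_neg]

theorem gaussianEnergy_le_one (ht : 0 ≤ t) (μ ν : Measure E) [IsProbabilityMeasure μ]
    [IsProbabilityMeasure ν] : gaussianEnergy t μ ν ≤ 1 := by
  rw [gaussianEnergy_eq_integral_prod ht]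
  simpa using integral_mono (integrable_exp_neg_mul_norm_sub_sq ht (μ.prod ν))
    (integrable_const 1) fun p ↦ exp_neg_mul_norm_sq_le_one ht _

theorem gaussianEnergy_pos (ht : 0 ≤ t) (μ ν : Measure E) [IsProbabilityMeasure μ]
    [IsProbabilityMeasure ν] : 0 < gaussianEnergy t μ ν := by
  rw [gaussianEnergy_eq_integral_prod ht]
  exact integral_exp_pos (integrable_exp_neg_mul_norm_sub_sq ht _)

theorem gaussianEnergy_self_eq_one_iff (ht : 0 < t) (μ : Measure E) [IsProbabilityMeasure μ] :
    gaussianEnergy t μ μ = 1 ↔ ∃ c, ∀ᵐ u ∂μ, u = c := by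
  have hae : gaussianEnergy t μ μ = 1 ↔ ∀ᵐ p ∂μ.prod μ, p.1 = p.2 := by
    rw [gaussianEnergy_eq_integral_prod ht.le]
    have h := integral_eq_iff_of_ae_le (integrable_exp_neg_mul_norm_sub_sq ht.le (μ.prod μ))
      (integrable_const 1) (ae_of_all _ fun p ↦ exp_neg_mul_norm_sq_le_one ht.le _)
    simpa [EventuallyEq, ht.ne', sub_eq_zero] using h
  rw [hae]
  constructor
  · intro h
    obtain ⟨c, hc⟩ := (Measure.ae_ae_of_ae_prod h).exists
    exact ⟨c, hc.mono fun u hu ↦ hu.symm⟩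
  · rintro ⟨c, hc⟩
    filter_upwards [Measure.quasiMeasurePreserving_fst.ae hc,
      Measure.quasiMeasurePreserving_snd.ae hc] with p hfst hsnd
    rw [hfst, hsnd]

end NormedGroup

variable {E : Type*} [NormedAddCommGroup E] [InnerProductSpace ℝ E] [FiniteDimensional ℝ E]
  [MeasurableSpace E] [BorelSpace E] {t : ℝ}

theorem gaussianEnergy_eq_integral_inner_charFun (ht : 0 ≤ t) (μ ν : Measure E)
    [IsFiniteMeasure μ] [IsFiniteMeasure ν] :
    gaussianEnergy t μ ν =
      ∫ ξ, ⟪charFun μ ξ, charFun ν ξ⟫ ∂gaussianSpectralMeasure E t := by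
  set ρ := μ ∗ ν.map (-·) with hρ
  have hfourier : ((gaussianEnergy t μ ν : ℝ) : ℂ) =
      ∫ ξ, charFun ρ ξ ∂gaussianSpectralMeasure E t := by
    rw [gaussianEnergy_eq_integral_conv ht, ← integral_complex_ofReal, integral_charFun_comm]
    simp only [charFun_gaussianSpectralMeasure ht, hρ]
  have hint : Integrable (charFun ρ) (gaussianSpectralMeasure E t) :=
    .of_bound (C := ρ.real Set.univ) (by fun_prop) (ae_of_all _ norm_charFun_le)
  rw [← Complex.ofReal_re (gaussianEnergy t μ ν), hfourier, ← RCLike.re_eq_complex_re,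
    ← integral_re hint]
  congr with ξ
  rw [hρ, charFun_conv_map_neg, Complex.inner, RCLike.re_eq_complex_re, ← Complex.conj_re]
  simp only [map_mul, Complex.conj_conj, mul_comm]

/-- The squared maximum mean discrepancy between two measures for the Gaussian kernel. -/
def gaussianDiscrepancy (t : ℝ) (μ ν : Measure E) : ℝ :=
  gaussianEnergy t μ μ - 2 * gaussianEnergy t μ ν + gaussianEnergy t ν ν

theorem gaussianDiscrepancy_eq_integral_norm_sub_sq (ht : 0 ≤ t) (μ ν : Measure E)
    [IsFiniteMeasure μ] [IsFiniteMeasure ν] :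
    gaussianDiscrepancy t μ ν =
      ∫ ξ, ‖charFun μ ξ - charFun ν ξ‖ ^ 2 ∂gaussianSpectralMeasure E t := by
  have hint (ρ σ : Measure E) [IsFiniteMeasure ρ] [IsFiniteMeasure σ] :=
    integrable_inner_charFun ρ σ (gaussianSpectralMeasure E t)
  simp_rw [norm_sub_sq_real, ← real_inner_self_eq_norm_sq]
  rw [integral_add, integral_sub (hint μ μ) ((hint μ ν).const_mul 2), integral_const_mul]
  · simp only [gaussianDiscrepancy, gaussianEnergy_eq_integral_inner_charFun ht]
  · exact (hint μ μ).sub ((hint μ ν).const_mul 2)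
  · exact hint ν ν

theorem gaussianDiscrepancy_nonneg (ht : 0 ≤ t) (μ ν : Measure E) [IsFiniteMeasure μ]
    [IsFiniteMeasure ν] : 0 ≤ gaussianDiscrepancy t μ ν := by
  rw [gaussianDiscrepancy_eq_integral_norm_sub_sq ht]
  exact integral_nonneg fun ξ ↦ by positivity

theorem gaussianDiscrepancy_eq_zero_iff (ht : 0 < t) (μ ν : Measure E) [IsFiniteMeasure μ]
    [IsFiniteMeasure ν] : gaussianDiscrepancy t μ ν = 0 ↔ μ = ν := by
  have hpos := isOpenPosMeasure_gaussianSpectralMeasure (E := E) ht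
  have hcont : Continuous fun ξ ↦ ‖charFun μ ξ - charFun ν ξ‖ ^ 2 := by fun_prop
  refine ⟨fun h ↦ Measure.ext_of_charFun (funext fun ξ ↦ ?_), ?_⟩
  · have hint := integrable_norm_charFun_sub_sq μ ν (gaussianSpectralMeasure E t)
    rw [gaussianDiscrepancy_eq_integral_norm_sub_sq ht.le,
      integral_eq_zero_iff_of_nonneg (fun ξ ↦ by positivity) hint,
      hcont.ae_eq_iff_eq _ continuous_zero] at h
    simpa [sub_eq_zero] using congrFun h ξ
  · rintro rfl
    rw [gaussianDiscrepancy]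
    ring

end GaussianEnergy

section GaussianMoments

theorem integral_Ioi_pow_mul_exp_neg_sq (j : ℕ) :
    ∫ r in Set.Ioi (0 : ℝ), r ^ j * Real.exp (-r ^ 2) = Real.Gamma (((j : ℝ) + 1) / 2) / 2 := by
  have h := integral_rpow_mul_exp_neg_rpow (p := 2) (q := j) two_pos
    (neg_one_lt_zero.trans_le j.cast_nonneg)
  simp only [Real.rpow_natCast, Real.rpow_ofNat] at h
  rw [h]
  ring

theorem integral_pow_even_mul_exp_neg_sq (k : ℕ) :
    ∫ y : ℝ, y ^ (2 * k) * Real.exp (-y ^ 2) = Real.Gamma (1 / 2 + k) := by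
  have h := integral_comp_abs (f := fun y : ℝ ↦ y ^ (2 * k) * Real.exp (-y ^ 2))
  simp only [sq_abs, (even_two_mul k).pow_abs] at h
  rw [h, integral_Ioi_pow_mul_exp_neg_sq, mul_div_cancel₀ _ two_ne_zero]
  congr 1
  push_cast
  ring

theorem integral_pow_odd_mul_exp_neg_sq (k : ℕ) :
    ∫ y : ℝ, y ^ (2 * k + 1) * Real.exp (-y ^ 2) = 0 := by
  have h := integral_neg_eq_self (fun y : ℝ ↦ y ^ (2 * k + 1) * Real.exp (-y ^ 2)) volume
  simp only [(odd_two_mul_add_one k).neg_pow, neg_sq, neg_mul, integral_neg] at h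
  linarith

theorem integral_exp_neg_sq : ∫ y : ℝ, Real.exp (-y ^ 2) = √π := by
  simpa using integral_gaussian 1

theorem nontrivial_of_norm_eq_one {E : Type*} [NormedAddCommGroup E] {u : E} (hu : ‖u‖ = 1) :
    Nontrivial E :=
  nontrivial_of_ne u 0 (norm_ne_zero_iff.1 (by simp [hu]))

theorem integral_comp_inner_mul_exp_neg_norm_sq {E : Type*} [NormedAddCommGroup E]
    [InnerProductSpace ℝ E] [FiniteDimensional ℝ E] [MeasurableSpace E] [BorelSpace E] {u : E}
    (hu : ‖u‖ = 1) (φ : ℝ → ℝ) :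
    ∫ x : E, φ ⟪u, x⟫ * Real.exp (-‖x‖ ^ 2) =
      (∫ y, φ y * Real.exp (-y ^ 2)) * √π ^ (Module.finrank ℝ E - 1) := by
  have : Nontrivial E := nontrivial_of_norm_eq_one hu
  obtain ⟨d, hd⟩ := Nat.exists_eq_succ_of_ne_zero (Module.finrank_pos (R := ℝ) (M := E)).ne'
  obtain ⟨b, hb⟩ := Orthonormal.exists_orthonormalBasis_extension_of_card_eq (𝕜 := ℝ)
    (ι := Fin (d + 1)) (by simpa using hd) (v := fun _ ↦ u) (s := {0})
    (orthonormal_subsingleton_iff.2 fun _ ↦ hu)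
  let factor : Fin (d + 1) → ℝ → ℝ :=
    Fin.cons (fun y ↦ φ y * Real.exp (-y ^ 2)) fun _ y ↦ Real.exp (-y ^ 2)
  have hfactor (x : EuclideanSpace ℝ (Fin (d + 1))) :
      φ (x 0) * Real.exp (-‖x‖ ^ 2) = ∏ i, factor i (x i) := by
    simp [factor, Fin.prod_univ_succ, EuclideanSpace.real_norm_sq_eq, ← Finset.sum_neg_distrib,
      Real.exp_sum, mul_assoc]
  calc ∫ x : E, φ ⟪u, x⟫ * Real.exp (-‖x‖ ^ 2)
    _ = ∫ x : E, φ (b.repr x 0) * Real.exp (-‖b.repr x‖ ^ 2) := by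
      simp only [b.repr_apply_apply, hb 0 rfl, LinearIsometryEquiv.norm_map]
    _ = ∫ x : EuclideanSpace ℝ (Fin (d + 1)), φ (x 0) * Real.exp (-‖x‖ ^ 2) :=
      b.repr.measurePreserving.integral_comp b.repr.toHomeomorph.measurableEmbedding
        fun x : EuclideanSpace ℝ (Fin (d + 1)) ↦ φ (x 0) * Real.exp (-‖x‖ ^ 2)
    _ = ∫ x : Fin (d + 1) → ℝ, ∏ i, factor i (x i) := by
      simp only [hfactor]
      exact ((PiLp.volume_preserving_toLp (Fin (d + 1))).integral_comp
        (MeasurableEquiv.toLp 2 _).measurableEmbedding _).symm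
    _ = (∫ y, φ y * Real.exp (-y ^ 2)) * √π ^ (Module.finrank ℝ E - 1) := by
      rw [integral_fintype_prod_volume_eq_prod, Fin.prod_univ_succ]
      simp [factor, integral_exp_neg_sq, hd]

end GaussianMoments

section Pochhammer

theorem Gamma_add_natCast_eq_ascPochhammer_mul {a : ℝ} (ha : 0 < a) (k : ℕ) :
    Real.Gamma (a + k) = (ascPochhammer ℝ k).eval a * Real.Gamma a := by
  induction k with
  | zero => simp
  | succ k ih =>
    rw [ascPochhammer_succ_eval, Nat.cast_succ, ← add_assoc, Real.Gamma_add_one (by positivity), ih]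
    ring

theorem factorial_two_mul_eq_ascPochhammer_half (k : ℕ) :
    ((2 * k).factorial : ℝ) = 4 ^ k * k.factorial * (ascPochhammer ℝ k).eval (1 / 2) := by
  induction k with
  | zero => simp
  | succ k ih =>
    rw [ascPochhammer_succ_eval, mul_add_one, Nat.factorial_succ, Nat.factorial_succ,
      Nat.factorial_succ]
    push_cast
    rw [ih]
    ring

end Pochhammer

section SphereMoments

theorem integral_comp_direction_mul_comp_norm {E : Type*} [NormedAddCommGroup E] [NormedSpace ℝ E]
    [FiniteDimensional ℝ E] [Nontrivial E] [MeasurableSpace E] [BorelSpace E] (μ : Measure E)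
    [μ.IsAddHaarMeasure] (f : E → ℝ) (g : ℝ → ℝ) :
    ∫ x, f (‖x‖⁻¹ • x) * g ‖x‖ ∂μ =
      (∫ v : sphere (0 : E) 1, f v ∂μ.toSphere) *
        ∫ r in Set.Ioi (0 : ℝ), r ^ (Module.finrank ℝ E - 1) * g r :=
  calc ∫ x, f (‖x‖⁻¹ • x) * g ‖x‖ ∂μ
    _ = ∫ x : ({0}ᶜ : Set E), f (‖x.1‖⁻¹ • x.1) * g ‖x.1‖ ∂μ.comap (↑) := by
      rw [integral_subtype_comap (measurableSet_singleton _).compl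
        fun x ↦ f (‖x‖⁻¹ • x) * g ‖x‖, restrict_compl_singleton]
    _ = ∫ p : sphere (0 : E) 1 × Set.Ioi (0 : ℝ), f p.1 * g p.2
          ∂μ.toSphere.prod (.volumeIoiPow (Module.finrank ℝ E - 1)) := by
      simpa using μ.measurePreserving_homeomorphUnitSphereProd.integral_comp
        (Homeomorph.measurableEmbedding _)
        fun p : sphere (0 : E) 1 × Set.Ioi (0 : ℝ) ↦ f p.1 * g p.2
    _ = (∫ v : sphere (0 : E) 1, f v ∂μ.toSphere) *
          ∫ r : Set.Ioi (0 : ℝ), g r ∂.volumeIoiPow (Module.finrank ℝ E - 1) :=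
      integral_prod_mul (fun v : sphere (0 : E) 1 ↦ f v) fun r : Set.Ioi (0 : ℝ) ↦ g r
    _ = _ := by
      simp only [Measure.volumeIoiPow, ENNReal.ofReal]
      rw [integral_withDensity_eq_integral_smul (by fun_prop), integral_subtype_comap
        measurableSet_Ioi fun r ↦ Real.toNNReal (r ^ (Module.finrank ℝ E - 1)) • g r,
        setIntegral_congr_fun measurableSet_Ioi fun r hr ↦ ?_]
      rw [NNReal.smul_def, Real.coe_toNNReal _ (pow_nonneg (le_of_lt hr) _), smul_eq_mul]

variable {E : Type*} [NormedAddCommGroup E] [InnerProductSpace ℝ E] [FiniteDimensional ℝ E]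
  [MeasurableSpace E] [BorelSpace E] {u : E}

variable (E) in
/-- The normalized surface measure on the unit sphere of a Euclidean space; it is the zero measure
when `E` is trivial. -/
def sphereUniform : Measure (sphere (0 : E) 1) :=
  ((volume : Measure E).toSphere Set.univ)⁻¹ • (volume : Measure E).toSphere

instance isProbabilityMeasure_sphereUniform [Nontrivial E] :
    IsProbabilityMeasure (sphereUniform E) where
  measure_univ := by
    rw [sphereUniform, Measure.smul_apply, smul_eq_mul]
    exact ENNReal.inv_mul_cancel
      (Measure.measure_univ_ne_zero.2 (volume : Measure E).toSphere_ne_zero) (measure_ne_top _ _)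

theorem integral_inner_pow_toSphere (hu : ‖u‖ = 1) (j : ℕ) :
    (∫ v : sphere (0 : E) 1, ⟪u, (v : E)⟫ ^ j ∂(volume : Measure E).toSphere) *
        Real.Gamma ((Module.finrank ℝ E + j) / 2) =
      2 * (∫ y : ℝ, y ^ j * Real.exp (-y ^ 2)) * √π ^ (Module.finrank ℝ E - 1) := by
  have : Nontrivial E := nontrivial_of_norm_eq_one hu
  have hd : 1 ≤ Module.finrank ℝ E := Module.finrank_pos
  have hhomogeneous (x : E) : ⟪u, x⟫ ^ j * Real.exp (-‖x‖ ^ 2) =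
      ⟪u, ‖x‖⁻¹ • x⟫ ^ j * (‖x‖ ^ j * Real.exp (-‖x‖ ^ 2)) := by
    rcases eq_or_ne x 0 with rfl | hx
    · cases j <;> simp
    · rw [real_inner_smul_right, ← mul_assoc, ← mul_pow, mul_right_comm,
        inv_mul_cancel₀ (norm_ne_zero_iff.2 hx), one_mul]
  have hradial : ∫ r in Set.Ioi (0 : ℝ),
      r ^ (Module.finrank ℝ E - 1) * (r ^ j * Real.exp (-r ^ 2)) =
        Real.Gamma ((Module.finrank ℝ E + j) / 2) / 2 := by
    simp only [← mul_assoc, ← pow_add]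
    rw [integral_Ioi_pow_mul_exp_neg_sq]
    push_cast [hd]
    ring_nf
  have h := integral_comp_inner_mul_exp_neg_norm_sq hu (· ^ j)
  simp only [hhomogeneous] at h
  rw [integral_comp_direction_mul_comp_norm volume (fun x ↦ ⟪u, x⟫ ^ j)
    fun r ↦ r ^ j * Real.exp (-r ^ 2), hradial] at h
  linear_combination 2 * h

theorem integral_inner_pow_sphereUniform (hu : ‖u‖ = 1) (j : ℕ) :
    ∫ v, ⟪u, (v : E)⟫ ^ j ∂sphereUniform E =
      (∫ y : ℝ, y ^ j * Real.exp (-y ^ 2)) / √π *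
        (Real.Gamma (Module.finrank ℝ E / 2) / Real.Gamma ((Module.finrank ℝ E + j) / 2)) := by
  have : Nontrivial E := nontrivial_of_norm_eq_one hu
  have hd : (0 : ℝ) < Module.finrank ℝ E := mod_cast Module.finrank_pos
  have hΓ : Real.Gamma ((Module.finrank ℝ E + j) / 2) ≠ 0 :=
    (Real.Gamma_pos_of_pos (by positivity)).ne'
  have harea : (volume : Measure E).toSphere.real Set.univ * Real.Gamma (Module.finrank ℝ E / 2) =
      2 * √π * √π ^ (Module.finrank ℝ E - 1) := by
    simpa [integral_exp_neg_sq] using integral_inner_pow_toSphere hu 0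
  have hmoment := integral_inner_pow_toSphere hu j
  have harea_ne : (volume : Measure E).toSphere.real Set.univ ≠ 0 :=
    left_ne_zero_of_mul (harea.trans_ne (by positivity))
  rw [sphereUniform, integral_smul_measure, ENNReal.toReal_inv, smul_eq_mul, ← measureReal_def]
  field_simp
  linear_combination √π * hmoment - (∫ y : ℝ, y ^ j * Real.exp (-y ^ 2)) * harea

theorem integral_inner_pow_odd_sphereUniform (hu : ‖u‖ = 1) (k : ℕ) :
    ∫ v, ⟪u, (v : E)⟫ ^ (2 * k + 1) ∂sphereUniform E = 0 := by
  rw [integral_inner_pow_sphereUniform hu, integral_pow_odd_mul_exp_neg_sq, zero_div, zero_mul]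

theorem integral_inner_pow_even_sphereUniform (hu : ‖u‖ = 1) (k : ℕ) :
    ∫ v, ⟪u, (v : E)⟫ ^ (2 * k) ∂sphereUniform E =
      (ascPochhammer ℝ k).eval (1 / 2) / (ascPochhammer ℝ k).eval (Module.finrank ℝ E / 2 : ℝ) := by
  have : Nontrivial E := nontrivial_of_norm_eq_one hu
  have hd : (0 : ℝ) < Module.finrank ℝ E / 2 := by simp [Module.finrank_pos]
  have hΓ : Real.Gamma (Module.finrank ℝ E / 2) ≠ 0 := (Real.Gamma_pos_of_pos hd).ne'
  have hshift : ((Module.finrank ℝ E : ℝ) + (2 * k : ℕ)) / 2 = Module.finrank ℝ E / 2 + k := by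
    push_cast
    ring
  rw [integral_inner_pow_sphereUniform hu, integral_pow_even_mul_exp_neg_sq, hshift,
    Gamma_add_natCast_eq_ascPochhammer_mul one_half_pos, Gamma_add_natCast_eq_ascPochhammer_mul hd,
    Real.Gamma_one_half_eq]
  field_simp

theorem hasSum_integral_exp_mul {Ω : Type*} [MeasurableSpace Ω] {μ : Measure Ω} [IsFiniteMeasure μ]
    {X : Ω → ℝ} (hX : AEStronglyMeasurable X μ) {C : ℝ} (hC : ∀ᵐ ω ∂μ, |X ω| ≤ C) (a : ℝ) :
    HasSum (fun j : ℕ ↦ a ^ j / j.factorial * ∫ ω, X ω ^ j ∂μ) (∫ ω, Real.exp (a * X ω) ∂μ) := by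
  simp only [← integral_const_mul]
  refine hasSum_integral_of_dominated_convergence
    (fun j _ ↦ (|a| * C) ^ j / j.factorial) (fun j ↦ (hX.pow j).const_mul _) (fun j ↦ ?_)
    (ae_of_all _ fun _ ↦ Real.summable_pow_div_factorial _) (integrable_const _)
    (ae_of_all _ fun ω ↦ ?_)
  · filter_upwards [hC] with ω hω
    rw [norm_mul, norm_div, norm_pow, norm_pow, RCLike.norm_natCast, Real.norm_eq_abs,
      Real.norm_eq_abs, mul_pow, div_mul_eq_mul_div]
    gcongr
  · have h := NormedSpace.expSeries_div_hasSum_exp (a * X ω)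
    rw [← Real.exp_eq_exp_ℝ] at h
    simpa only [mul_pow, mul_div_right_comm] using h

theorem integral_exp_two_mul_inner_sphereUniform (hu : ‖u‖ = 1) (t : ℝ) :
    ∫ v, Real.exp (2 * t * ⟪u, (v : E)⟫) ∂sphereUniform E =
      hyp0F1 (Module.finrank ℝ E / 2) (t ^ 2) := by
  have : Nontrivial E := nontrivial_of_norm_eq_one hu
  have hbound (v : sphere (0 : E) 1) : |⟪u, (v : E)⟫| ≤ 1 := by
    simpa [hu] using abs_real_inner_le_norm u v
  have hseries := hasSum_integral_exp_mul (μ := sphereUniform E) (X := fun v ↦ ⟪u, (v : E)⟫)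
    (Continuous.aestronglyMeasurable (by fun_prop)) (ae_of_all _ hbound) (2 * t)
  rw [← (mul_right_injective₀ two_ne_zero).hasSum_iff fun j hj ↦ ?_] at hseries
  · rw [hyp0F1, ← hseries.tsum_eq]
    congr with k
    have hhalf : (ascPochhammer ℝ k).eval (1 / 2 : ℝ) ≠ 0 :=
      (ascPochhammer_pos k _ one_half_pos).ne'
    simp only [Function.comp_apply]
    rw [integral_inner_pow_even_sphereUniform hu, factorial_two_mul_eq_ascPochhammer_half, pow_mul,
      mul_pow, mul_pow]
    norm_num only
    field_simp
  · obtain ⟨k, rfl⟩ : Odd j := by simpa [← even_iff_two_dvd, Dvd.dvd, eq_comm] using hj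
    rw [integral_inner_pow_odd_sphereUniform hu, mul_zero]

theorem integral_exp_neg_mul_norm_sub_sq_sphereUniform (hu : ‖u‖ = 1) (t : ℝ) :
    ∫ v, Real.exp (-t * ‖u - (v : E)‖ ^ 2) ∂sphereUniform E =
      Real.exp (-2 * t) * hyp0F1 (Module.finrank ℝ E / 2) (t ^ 2) := by
  rw [← integral_exp_two_mul_inner_sphereUniform hu t, ← integral_const_mul]
  congr with v
  rw [← Real.exp_add, norm_sub_sq_real, hu, norm_eq_of_mem_sphere v]
  ring_nf

variable (E) in
theorem hyp0F1_half_finrank_sq_pos [Nontrivial E] (t : ℝ) :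
    0 < hyp0F1 (Module.finrank ℝ E / 2) (t ^ 2) := by
  obtain ⟨u, hu⟩ := exists_norm_eq E zero_le_one
  rw [← integral_exp_two_mul_inner_sphereUniform hu t]
  exact integral_exp_pos (Continuous.integrable_of_hasCompactSupport (by fun_prop)
    (.of_compactSpace _))

end SphereMoments

section UniformityLoss

variable {E : Type*} [NormedAddCommGroup E] [InnerProductSpace ℝ E] [FiniteDimensional ℝ E]
  [MeasurableSpace E] [BorelSpace E] {t : ℝ}

theorem gaussianEnergy_map_val_sphereUniform [Nontrivial E] (μ : Measure (sphere (0 : E) 1))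
    [IsProbabilityMeasure μ] (t : ℝ) :
    gaussianEnergy t (μ.map Subtype.val) ((sphereUniform E).map Subtype.val) =
      Real.exp (-2 * t) * hyp0F1 (Module.finrank ℝ E / 2) (t ^ 2) := by
  have hpotential (v : sphere (0 : E) 1) :=
    integral_exp_neg_mul_norm_sub_sq_sphereUniform (norm_eq_of_mem_sphere v) t
  rw [gaussianEnergy_map (by fun_prop) (by fun_prop)]
  simp only [hpotential, integral_const, probReal_univ, one_smul]

theorem gaussianDiscrepancy_map_val_sphereUniform [Nontrivial E] (μ : Measure (sphere (0 : E) 1))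
    [IsProbabilityMeasure μ] (t : ℝ) :
    gaussianDiscrepancy t (μ.map Subtype.val) ((sphereUniform E).map Subtype.val) =
      gaussianEnergy t (μ.map Subtype.val) (μ.map Subtype.val) -
        Real.exp (-2 * t) * hyp0F1 (Module.finrank ℝ E / 2) (t ^ 2) := by
  rw [gaussianDiscrepancy, gaussianEnergy_map_val_sphereUniform,
    gaussianEnergy_map_val_sphereUniform]
  ring

theorem exp_mul_hyp0F1_le_gaussianEnergy [Nontrivial E] (ht : 0 ≤ t)
    (μ : Measure (sphere (0 : E) 1)) [IsProbabilityMeasure μ] :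
    Real.exp (-2 * t) * hyp0F1 (Module.finrank ℝ E / 2) (t ^ 2) ≤
      gaussianEnergy t (μ.map Subtype.val) (μ.map Subtype.val) := by
  rw [← sub_nonneg, ← gaussianDiscrepancy_map_val_sphereUniform]
  exact gaussianDiscrepancy_nonneg ht _ _

theorem gaussianEnergy_eq_exp_mul_hyp0F1_iff [Nontrivial E] (ht : 0 < t)
    (μ : Measure (sphere (0 : E) 1)) [IsProbabilityMeasure μ] :
    gaussianEnergy t (μ.map Subtype.val) (μ.map Subtype.val) =
        Real.exp (-2 * t) * hyp0F1 (Module.finrank ℝ E / 2) (t ^ 2) ↔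
      μ = sphereUniform E := by
  have hcoe : MeasurableEmbedding (Subtype.val : sphere (0 : E) 1 → E) :=
    .subtype_coe isClosed_sphere.measurableSet
  rw [← sub_eq_zero, ← gaussianDiscrepancy_map_val_sphereUniform,
    gaussianDiscrepancy_eq_zero_iff ht, hcoe.map_injective.eq_iff]

theorem exists_ae_val_eq_iff {β : Type*} [MeasurableSpace β] {s : Set β} {μ : Measure s}
    [NeZero μ] : (∃ c : β, ∀ᵐ v ∂μ, v.1 = c) ↔ ∃ c : s, ∀ᵐ v ∂μ, v = c := by
  constructor
  · rintro ⟨c, hc⟩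
    obtain ⟨v, hv⟩ := hc.exists
    exact ⟨v, hc.mono fun _ h ↦ Subtype.ext (h.trans hv.symm)⟩
  · rintro ⟨c, hc⟩
    exact ⟨c, hc.mono fun _ h ↦ congrArg _ h⟩

theorem gaussianEnergy_map_val_self_eq_one_iff (ht : 0 < t) (μ : Measure (sphere (0 : E) 1))
    [IsProbabilityMeasure μ] :
    gaussianEnergy t (μ.map Subtype.val) (μ.map Subtype.val) = 1 ↔ ∃ c, ∀ᵐ v ∂μ, v = c := by
  have := Measure.isProbabilityMeasure_map (μ := μ) measurable_subtype_coe.aemeasurable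
  rw [gaussianEnergy_self_eq_one_iff ht, ← exists_ae_val_eq_iff]
  simp only [ae_map_iff measurable_subtype_coe.aemeasurable measurableSet_eq]

variable {Ω : Type*} [MeasurableSpace Ω]

/-- The loss `Lunif` of an encoder of an arbitrary measure space into the unit sphere of an
arbitrary Euclidean space. -/
def uniformityLoss (P : Measure Ω) (f : Ω → sphere (0 : E) 1) (t : ℝ) : ℝ :=
  Real.log (∫ x, ∫ y, Real.exp (-t * ‖(f x : E) - (f y : E)‖ ^ 2) ∂P ∂P)

variable {P : Measure Ω} [IsProbabilityMeasure P] {f : Ω → sphere (0 : E) 1}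

theorem uniformityLoss_eq_log_gaussianEnergy (hf : AEMeasurable f P) (t : ℝ) :
    uniformityLoss P f t =
      Real.log (gaussianEnergy t ((P.map f).map Subtype.val)
        ((P.map f).map Subtype.val)) := by
  have hcoe : AEMeasurable (fun x ↦ (f x : E)) P := by fun_prop
  rw [AEMeasurable.map_map_of_aemeasurable (by fun_prop) hf]
  exact congrArg Real.log (gaussianEnergy_map hcoe hcoe t).symm

theorem Lunif_range_general (ht : 0 < t) (hf : AEMeasurable f P) :
    (-2 * t + Real.log (hyp0F1 (Module.finrank ℝ E / 2) (t ^ 2)) ≤ uniformityLoss P f t ∧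
        uniformityLoss P f t ≤ 0) ∧
      (uniformityLoss P f t = -2 * t + Real.log (hyp0F1 (Module.finrank ℝ E / 2) (t ^ 2)) ↔
        P.map f = sphereUniform E) ∧
      (uniformityLoss P f t = 0 ↔ ∃ c, ∀ᵐ x ∂P, f x = c) := by
  obtain ⟨x₀⟩ : Nonempty Ω := P.nonempty_of_neZero
  have : Nontrivial E := nontrivial_of_norm_eq_one (norm_eq_of_mem_sphere (f x₀))
  have hmap := Measure.isProbabilityMeasure_map hf
  have hmap_val := Measure.isProbabilityMeasure_map (μ := P.map f)
    measurable_subtype_coe.aemeasurable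
  have henergy := gaussianEnergy_pos ht.le ((P.map f).map Subtype.val) ((P.map f).map Subtype.val)
  have hhyp := hyp0F1_half_finrank_sq_pos E t
  have hmin : 0 < Real.exp (-2 * t) * hyp0F1 (Module.finrank ℝ E / 2) (t ^ 2) := by positivity
  rw [uniformityLoss_eq_log_gaussianEnergy hf, ← Real.log_exp (-2 * t),
    ← Real.log_mul (Real.exp_ne_zero _) hhyp.ne']
  refine ⟨⟨?_, ?_⟩, ?_, ?_⟩
  · exact Real.log_le_log hmin (exp_mul_hyp0F1_le_gaussianEnergy ht.le _)
  · exact Real.log_nonpos henergy.le (gaussianEnergy_le_one ht.le _ _)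
  · rw [Real.log_injOn_pos.eq_iff henergy hmin, gaussianEnergy_eq_exp_mul_hyp0F1_iff ht]
  · rw [← Real.log_one, Real.log_injOn_pos.eq_iff henergy (Set.mem_Ioi.2 one_pos),
      gaussianEnergy_map_val_self_eq_one_iff ht]
    simp only [ae_map_iff hf measurableSet_eq]

end UniformityLoss

/-- Range of `L_unif`: it lies in `[−2t + log ₀F₁(;m/2;t²), 0]`; the lower
bound is attained iff `f` is perfectly uniform, and the upper bound iff `f` is degenerate
(`p_data`-a.e. constant). -/
theorem Lunif_range (t : ℝ) (ht : 0 < t) {n m : ℕ} (hm : 2 ≤ m)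
    (pdata : Measure (Euc n)) [IsProbabilityMeasure pdata]
    (f : Euc n → Sph m) (hf : Measurable f) :
    (-2 * t + Real.log (hyp0F1 ((m : ℝ) / 2) (t ^ 2)) ≤ Lunif pdata f t ∧
        Lunif pdata f t ≤ 0) ∧
      (Lunif pdata f t = -2 * t + Real.log (hyp0F1 ((m : ℝ) / 2) (t ^ 2)) ↔
        pdata.map f = unifSphere m) ∧
      (Lunif pdata f t = 0 ↔ ∃ c : Sph m, ∀ᵐ x ∂pdata, f x = c) := by
  simpa only [finrank_euclideanSpace_fin, uniformityLoss, sphereUniform, Lunif, unifSphere] using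
    Lunif_range_general ht hf.aemeasurable
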